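/- There exists a universal constant K > 0 with the following property (utility of task-weighted noisy gradient descent in the Lipschitz convex case, Theorem 4(a)). Let d, m ≥ 1 and n₁,…,n_m ≥ 1 be integers, Γ > 0, and let C ⊆ ℝ^d be a nonempty compact convex set of Euclidean diameter D > 0. For each i ∈ {1,…,m} and j ∈ {1,…,n_i}, let ℓ_{ij} : ℝ^d → ℝ be convex, differentiable, and Γ-Lipschitz on C; set L_i = ∑_{j=1}^{n_i} ℓ_{ij} and let θ*_i be a minimizer of L_i over C. Let ω₁,…,ω_m > 0 be task weights and set T = ⌈(2/d)·(∑_{i=1}^m n_i²)/(∑_{i=1}^m 1/ω_i²)⌉. On a probability space, let (ξ_i⁽ᵗ⁾)_{i ∈ [m], t ∈ [T]} be independent random vectors in ℝ^d, each with the standard Gaussian law (d independent N(0,1) coordinates). For each i, let θ_i⁽⁰⁾ ∈ C be deterministic and define the noisy gradient descent iterates θ_i⁽ᵗ⁾ = Π_C( θ_i⁽ᵗ⁻¹⁾ − η_i⁽ᵗ⁾( ω_i ∇L_i(θ_i⁽ᵗ⁻¹⁾) + Γ√(T/2)·ξ_i⁽ᵗ⁾ ) ) with step sizes η_i⁽ᵗ⁾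 = D/( Γ·√(ω_i² n_i² + T d/2) · √t ). Then ∑_{i=1}^m E[L_i(θ_i⁽ᵀ⁾)] − ∑_{i=1}^m L_i(θ*_i) ≤ K · D · Γ · (1 + log T) · √( m d · ∑_{i=1}^m 1/ω_i² ). -/

import Mathlib

open MeasureTheory ProbabilityTheory

/-!
For a single task this is the last-iterate argument of Shamir and Zhang. One projected step bounds
the expected regret against any comparator that only depends on the past, because the noise of the
step is centred given the past; comparators may therefore be the minimizer or an earlier iterate
`θ_s`. Since the step sizes decay like `1/√t`, summation by parts bounds the regret over `[s, T)` by
a multiple of `D G (T - s)/√T`, with `G²` a bound on the second moment of the noisy gradients.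
Hence the averages of the objective over the last `k` and the last `k + 1` iterates differ by
`O(D G/(k √T))`, and the harmonic sum over `k` is the source of the factor `1 + log T`.

A Lipschitz bound on `C` does not bound the gradient, only its inner product with directions between
points of `C`. This suffices, because the displacement of a projected step is such a direction.

Dividing by the task weight leaves the error `D Γ (1 + log T) √(n_i²/T + d/(2 w_i²))` for task `i`.
The horizon `T` is chosen so that the two terms under the root balance when summed over `i`, and
Cauchy-Schwarz then bounds the sum of the roots.
-/

section Sequences

lemma one_div_sqrt_add_one_le {x : ℝ} (hx : 0 ≤ x) : 1 / √(x + 1) ≤ 2 * (√(x + 1) - √x) := by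
  have hle : √x ≤ √(x + 1) := Real.sqrt_le_sqrt (by linarith)
  have hsq : √(x + 1) ^ 2 - √x ^ 2 = 1 := by
    rw [Real.sq_sqrt (by linarith), Real.sq_sqrt hx]; ring
  rw [div_le_iff₀ (Real.sqrt_pos.2 (by linarith))]
  nlinarith

lemma sqrt_sub_sqrt_le_sub_div_sqrt {x y : ℝ} (hx : 0 ≤ x) (hxy : x ≤ y) (hy : 0 < y) :
    √y - √x ≤ (y - x) / √y := by
  have hle : √x ≤ √y := Real.sqrt_le_sqrt hxy
  rw [le_div_iff₀ (Real.sqrt_pos.2 hy)]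
  nlinarith [Real.sq_sqrt hx, Real.sq_sqrt hy.le, Real.sqrt_nonneg x]

lemma sum_Ico_le_of_le_sqrt_mul_sub {b e : ℕ → ℝ} {R K : ℝ} (hK : 0 ≤ K) {s N : ℕ}
    (hsN : s ≤ N) (he : ∀ t, s ≤ t → t < N → e t ≤ R)
    (hb : ∀ t, s ≤ t → t < N → b t ≤ √(t + 1) * (e t - e (t + 1)) + K / √(t + 1)) :
    ∑ t ∈ Finset.Ico s N, b t ≤ √s * e s - √N * e N + (R + 2 * K) * (√N - √s) := by
  induction N, hsN using Nat.le_induction with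
  | base => simp
  | succ N hsN ih =>
    have hprev := ih (fun t hs ht => he t hs (by omega)) fun t hs ht => hb t hs (by omega)
    have hnoise : K / √(N + 1) ≤ 2 * K * (√(N + 1) - √N) := by
      have := mul_le_mul_of_nonneg_left (one_div_sqrt_add_one_le N.cast_nonneg) hK
      rw [mul_one_div] at this
      linarith
    have hweight : (√(N + 1) - √N) * e N ≤ (√(N + 1) - √N) * R :=
      mul_le_mul_of_nonneg_left (he N hsN N.lt_succ_self)
        (sub_nonneg.2 (Real.sqrt_le_sqrt (by linarith)))
    rw [Finset.sum_Ico_succ_top hsN]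
    push_cast
    linarith [hb N hsN N.lt_succ_self]

lemma sum_Ico_le_sub_mul_div_sqrt {b e : ℕ → ℝ} {R K : ℝ} (hR : 0 ≤ R) (hK : 0 ≤ K) {s N : ℕ}
    (hsN : s < N) (hs : √s * e s = 0) (he_nonneg : 0 ≤ e N)
    (he : ∀ t, s ≤ t → t < N → e t ≤ R)
    (hb : ∀ t, s ≤ t → t < N → b t ≤ √(t + 1) * (e t - e (t + 1)) + K / √(t + 1)) :
    ∑ t ∈ Finset.Ico s N, b t ≤ (N - s) * ((R + 2 * K) / √N) := by
  have hsqrt := sqrt_sub_sqrt_le_sub_div_sqrt s.cast_nonneg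
    (Nat.cast_le.2 hsN.le) (Nat.cast_pos.2 (s.zero_le.trans_lt hsN) : (0 : ℝ) < N)
  calc ∑ t ∈ Finset.Ico s N, b t
      ≤ √s * e s - √N * e N + (R + 2 * K) * (√N - √s) :=
        sum_Ico_le_of_le_sqrt_mul_sub hK hsN.le he hb
    _ ≤ (R + 2 * K) * (√N - √s) := by
        linarith [mul_nonneg (Real.sqrt_nonneg (N : ℝ)) he_nonneg]
    _ ≤ (R + 2 * K) * ((N - s) / √N) := by gcongr
    _ = (N - s) * ((R + 2 * K) / √N) := by ring

lemma le_average_range_add_mul_harmonic {a : ℕ → ℝ} {B : ℝ} {n : ℕ}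
    (h : ∀ k < n, ∑ j ∈ Finset.range (k + 2), a j ≤ (k + 2) * (a (k + 1) + B)) :
    a 0 ≤ (∑ j ∈ Finset.range (n + 1), a j) / (n + 1) + B * harmonic n := by
  induction n with
  | zero => simp
  | succ n ih =>
    have hn := h n n.lt_succ_self
    have hprev := ih fun k hk => h k (by omega)
    have havg : (∑ j ∈ Finset.range (n + 1), a j) / (n + 1) ≤
        (∑ j ∈ Finset.range (n + 2), a j) / (n + 2) + B / (n + 1) := by
      rw [Finset.sum_range_succ _ (n + 1)] at hn ⊢
      field_simp
      linarith
    rw [harmonic_succ]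
    push_cast
    calc a 0 ≤ (∑ j ∈ Finset.range (n + 1), a j) / (n + 1) + B * harmonic n := hprev
      _ ≤ _ := by
        rw [add_assoc (n : ℝ) 1 1, one_add_one_eq_two]
        linarith [mul_add B (harmonic n) ((n : ℝ) + 1)⁻¹, div_eq_mul_inv B ((n : ℝ) + 1)]

lemma le_add_mul_one_add_harmonic {a : ℕ → ℝ} {b B : ℝ} {n : ℕ}
    (hsuffix : ∀ s < n, ∑ t ∈ Finset.Ico s (n + 1), (a t - a s) ≤ (n + 1 - s) * B)
    (hsum : ∑ t ∈ Finset.range (n + 1), (a t - b) ≤ (n + 1) * B) :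
    a n ≤ b + B * (1 + harmonic n) := by
  have hreflect (k : ℕ) (hk : k ≤ n) :
      ∑ j ∈ Finset.range (k + 1), a (n - j) = ∑ t ∈ Finset.Ico (n - k) (n + 1), a t := by
    rw [Finset.range_eq_Ico, Finset.sum_Ico_reflect a 0 (by omega)]
    congr 2
    omega
  have haverage := le_average_range_add_mul_harmonic (a := fun j => a (n - j)) (B := B) (n := n)
    fun k hk => by
      have hs := hsuffix (n - (k + 1)) (by omega)
      rw [Finset.sum_sub_distrib, Finset.sum_const, Nat.card_Ico, nsmul_eq_mul,
        show n + 1 - (n - (k + 1)) = k + 2 by omega, Nat.cast_sub hk] at hs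
      rw [hreflect (k + 1) hk]
      push_cast at hs ⊢
      linarith
  rw [hreflect n le_rfl, Nat.sub_self, ← Finset.range_eq_Ico, Nat.sub_zero] at haverage
  rw [Finset.sum_sub_distrib, Finset.sum_const, Finset.card_range, nsmul_eq_mul] at hsum
  have hmean : (∑ t ∈ Finset.range (n + 1), a t) / (n + 1) ≤ b + B := by
    rw [div_le_iff₀ (by positivity)]
    push_cast at hsum
    linarith
  linarith

lemma harmonic_le_one_add_log_succ (n : ℕ) : (harmonic n : ℝ) ≤ 1 + Real.log (n + 1) := by
  have h := harmonic_le_one_add_log (n + 1)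
  rw [harmonic_succ] at h
  push_cast at h
  linarith [show (0 : ℝ) ≤ ((n : ℝ) + 1)⁻¹ by positivity]

end Sequences

section Projection

variable {E : Type*} [NormedAddCommGroup E]

/-- `P` maps every point to a closest point of `C`; this is how the projection `Π_C` is encoded. -/
def IsMetricProjection (C : Set E) (P : E → E) : Prop :=
  ∀ x, P x ∈ C ∧ ∀ y ∈ C, ‖x - P x‖ ≤ ‖x - y‖

namespace IsMetricProjection

variable {C : Set E} {P : E → E}

lemma mem (hP : IsMetricProjection C P) (x : E) : P x ∈ C := (hP x).1

lemma apply_of_mem (hP : IsMetricProjection C P) {x : E} (hx : x ∈ C) : P x = x := by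
  have h := (hP x).2 x hx
  rw [sub_self, norm_zero, norm_le_zero_iff, sub_eq_zero] at h
  exact h.symm

variable [InnerProductSpace ℝ E]

lemma inner_sub_le_zero (hP : IsMetricProjection C P) (hC : Convex ℝ C) (x : E) {z : E}
    (hz : z ∈ C) : inner ℝ (x - P x) (z - P x) ≤ 0 := by
  have : Nonempty C := ⟨⟨z, hz⟩⟩
  refine (norm_eq_iInf_iff_real_inner_le_zero hC (hP.mem x)).1 (le_antisymm ?_ ?_) z hz
  · exact le_ciInf fun y => (hP x).2 y y.2
  · have hbdd : BddBelow (Set.range fun y : C => ‖x - y‖) :=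
      ⟨0, Set.forall_mem_range.2 fun _ => norm_nonneg _⟩
    exact ciInf_le hbdd ⟨P x, hP.mem x⟩

lemma lipschitzWith (hP : IsMetricProjection C P) (hC : Convex ℝ C) : LipschitzWith 1 P := by
  refine LipschitzWith.of_dist_le_mul fun x y => ?_
  rw [NNReal.coe_one, one_mul, dist_eq_norm, dist_eq_norm]
  have hx := hP.inner_sub_le_zero hC x (hP.mem y)
  have hy := hP.inner_sub_le_zero hC y (hP.mem x)
  have hmono : ‖P x - P y‖ ^ 2 ≤ inner ℝ (x - y) (P x - P y) := by
    have hsplit : inner ℝ (x - y) (P x - P y) = ‖P x - P y‖ ^ 2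
        - inner ℝ (x - P x) (P y - P x) - inner ℝ (y - P y) (P x - P y) := by
      rw [← real_inner_self_eq_norm_sq]
      simp only [inner_sub_left, inner_sub_right]
      ring
    linarith
  have hcs := real_inner_le_norm (x - y) (P x - P y)
  by_contra! hlt
  nlinarith [norm_nonneg (x - y)]

lemma norm_step_sub_sq_le (hP : IsMetricProjection C P) (hC : Convex ℝ C) {x z p : E} {η B : ℝ}
    (hη : 0 ≤ η) (hz : z ∈ C)
    (hB : inner ℝ p (x - P (x - η • p)) ≤ B * ‖x - P (x - η • p)‖) :
    ‖P (x - η • p) - z‖ ^ 2 ≤ ‖x - z‖ ^ 2 - 2 * η * inner ℝ p (x - z) + η ^ 2 * B ^ 2 := by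
  set u := P (x - η • p)
  have hvar : inner ℝ (x - η • p - u) (z - u) ≤ 0 := hP.inner_sub_le_zero hC _ hz
  have hexpand : ‖u - z‖ ^ 2 = ‖x - z‖ ^ 2 - ‖x - u‖ ^ 2 - 2 * η * inner ℝ p (x - z)
      + 2 * η * inner ℝ p (x - u) + 2 * inner ℝ (x - η • p - u) (z - u) := by
    simp only [← real_inner_self_eq_norm_sq, inner_sub_left, inner_sub_right,
      real_inner_smul_left, real_inner_comm u z, real_inner_comm u x, real_inner_comm z x]
    ring
  nlinarith [mul_le_mul_of_nonneg_left hB hη, sq_nonneg (‖x - u‖ - η * B)]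

lemma norm_sub_step_le (hP : IsMetricProjection C P) (hC : Convex ℝ C) {x p : E} {η B : ℝ}
    (hη : 0 ≤ η) (hB_nonneg : 0 ≤ B) (hx : x ∈ C)
    (hB : inner ℝ p (x - P (x - η • p)) ≤ B * ‖x - P (x - η • p)‖) :
    ‖x - P (x - η • p)‖ ≤ η * B := by
  have h := hP.norm_step_sub_sq_le hC hη hx hB
  rw [sub_self, norm_zero, inner_zero_right, norm_sub_rev] at h
  exact abs_le_of_sq_le_sq' (by linarith [mul_pow η B 2]) (by positivity) |>.2

end IsMetricProjection

end Projection

section Subgradient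

variable {E : Type*} [NormedAddCommGroup E] [InnerProductSpace ℝ E]

/-- `g` selects subgradients of `F` on `C` whose slopes in the directions pointing from `C` into
`C` are at most `A`. The norm of `g` itself may exceed `A`: Lipschitz continuity on `C` says nothing
about the component of a gradient normal to `C`. -/
structure HasBoundedSubgradientOn (C : Set E) (F : E → ℝ) (g : E → E) (A : ℝ) : Prop where
  sub_le_inner : ∀ x ∈ C, ∀ z ∈ C, F x - F z ≤ inner ℝ (g x) (x - z)
  inner_le : ∀ x ∈ C, ∀ z ∈ C, inner ℝ (g x) (x - z) ≤ A * ‖x - z‖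

namespace HasBoundedSubgradientOn

variable {C : Set E} {F : E → ℝ} {g : E → E} {A : ℝ}

lemma sub_le (h : HasBoundedSubgradientOn C F g A) {x z : E} (hx : x ∈ C) (hz : z ∈ C) :
    F x - F z ≤ A * ‖x - z‖ :=
  (h.sub_le_inner x hx z hz).trans (h.inner_le x hx z hz)

lemma abs_sub_le (h : HasBoundedSubgradientOn C F g A) {x z : E} (hx : x ∈ C) (hz : z ∈ C) :
    |F x - F z| ≤ A * ‖x - z‖ :=
  abs_sub_le_iff.2 ⟨h.sub_le hx hz, norm_sub_rev x z ▸ h.sub_le hz hx⟩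

lemma const_mul (h : HasBoundedSubgradientOn C F g A) {w : ℝ} (hw : 0 ≤ w) :
    HasBoundedSubgradientOn C (fun x => w * F x) (fun x => w • g x) (w * A) where
  sub_le_inner x hx z hz := by
    rw [real_inner_smul_left, ← mul_sub]
    exact mul_le_mul_of_nonneg_left (h.sub_le_inner x hx z hz) hw
  inner_le x hx z hz := by
    rw [real_inner_smul_left, mul_assoc]
    exact mul_le_mul_of_nonneg_left (h.inner_le x hx z hz) hw

lemma sum {ι : Type*} {s : Finset ι} {F : ι → E → ℝ} {g : ι → E → E} {A : ι → ℝ}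
    (h : ∀ i ∈ s, HasBoundedSubgradientOn C (F i) (g i) (A i)) :
    HasBoundedSubgradientOn C (fun x => ∑ i ∈ s, F i x) (fun x => ∑ i ∈ s, g i x)
      (∑ i ∈ s, A i) where
  sub_le_inner x hx z hz := by
    rw [sum_inner, ← Finset.sum_sub_distrib]
    exact Finset.sum_le_sum fun i hi => (h i hi).sub_le_inner x hx z hz
  inner_le x hx z hz := by
    rw [sum_inner, Finset.sum_mul]
    exact Finset.sum_le_sum fun i hi => (h i hi).inner_le x hx z hz

lemma continuous_comp (h : HasBoundedSubgradientOn C F g A) (hC : Convex ℝ C) {P : E → E}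
    (hP : IsMetricProjection C P) : Continuous (F ∘ P) := by
  refine continuous_iff_continuousAt.2 fun y => tendsto_iff_dist_tendsto_zero.2 ?_
  have hlim : Filter.Tendsto (fun x => A * ‖P x - P y‖) (nhds y) (nhds 0) := by
    have hcont : Continuous fun x => A * ‖P x - P y‖ := by
      have := (hP.lipschitzWith hC).continuous
      fun_prop
    simpa using hcont.tendsto y
  exact squeeze_zero (fun _ => dist_nonneg)
    (fun x => Real.dist_eq (F (P x)) (F (P y)) ▸ h.abs_sub_le (hP.mem x) (hP.mem y)) hlim

section Gradient

variable [CompleteSpace E]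

lemma of_convexOn (hconv : ConvexOn ℝ C F) (hdiff : ∀ x ∈ C, DifferentiableAt ℝ F x)
    (hlip : ∀ x ∈ C, ∀ y ∈ C, |F x - F y| ≤ A * ‖x - y‖) :
    HasBoundedSubgradientOn C F (gradient F) A := by
  have hslope (x) (hx : x ∈ C) (z) :
      Filter.Tendsto (fun t : ℝ => t⁻¹ * (F (x + t • (z - x)) - F x)) (nhdsWithin 0 (Set.Ioi 0))
        (nhds (-inner ℝ (gradient F x) (x - z))) := by
    rw [← inner_neg_right, neg_sub, inner_gradient_left]
    exact ((hdiff x hx).hasFDerivAt.hasLineDerivAt _).tendsto_slope_zero_right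
  have hunit : Set.Ioo (0 : ℝ) 1 ∈ nhdsWithin 0 (Set.Ioi 0) := Ioo_mem_nhdsGT one_pos
  refine ⟨fun x hx z hz => ?_, fun x hx z hz => ?_⟩
  · rw [← neg_le_neg_iff, neg_sub]
    refine le_of_tendsto (hslope x hx z) ?_
    filter_upwards [hunit] with t ht
    have hchord : F (x + t • (z - x)) ≤ (1 - t) * F x + t * F z := by
      have := hconv.2 hx hz (sub_nonneg.2 ht.2.le) ht.1.le (sub_add_cancel 1 t)
      rwa [smul_eq_mul, smul_eq_mul,
        show (1 - t) • x + t • z = x + t • (z - x) by module] at this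
    rw [inv_mul_le_iff₀ ht.1]
    linarith
  · rw [← neg_le_neg_iff]
    refine ge_of_tendsto (hslope x hx z) ?_
    filter_upwards [hunit] with t ht
    have hmem := hconv.1.add_smul_sub_mem hx hz ⟨ht.1.le, ht.2.le⟩
    have hstep := (abs_le.1 (hlip _ hmem x hx)).1
    rw [add_sub_cancel_left, norm_smul, Real.norm_of_nonneg ht.1.le, norm_sub_rev] at hstep
    rw [le_inv_mul_iff₀ ht.1]
    linarith

end Gradient

end HasBoundedSubgradientOn

variable [CompleteSpace E]

lemma gradient_fun_sum {ι : Type*} {s : Finset ι} {F : ι → E → ℝ} {x : E}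
    (h : ∀ i ∈ s, DifferentiableAt ℝ (F i) x) :
    gradient (fun y => ∑ i ∈ s, F i y) x = ∑ i ∈ s, gradient (F i) x := by
  simp only [gradient, fderiv_fun_sum h, map_sum]

lemma measurable_gradient [MeasurableSpace E] [BorelSpace E] (F : E → ℝ) :
    Measurable (gradient F) :=
  (InnerProductSpace.toDual ℝ E).symm.continuous.measurable.comp (measurable_fderiv ℝ F)

end Subgradient

section Noise

variable {Ω : Type*} {mΩ : MeasurableSpace Ω} {μ : Measure Ω} {T : ℕ}

section MartingaleNoise

variable {E : Type*} [NormedAddCommGroup E] [InnerProductSpace ℝ E]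

lemma integral_inner_eq_zero_of_condExp_eq_zero [CompleteSpace E] [IsFiniteMeasure μ]
    {m : MeasurableSpace Ω} (hm : m ≤ mΩ) {X Y : Ω → E} (hX : Integrable X μ)
    (hX_zero : μ[X | m] =ᵐ[μ] 0) (hY : StronglyMeasurable[m] Y)
    (hXY : Integrable (fun ω => inner ℝ (X ω) (Y ω)) μ) :
    ∫ ω, inner ℝ (X ω) (Y ω) ∂μ = 0 := by
  have hpull : μ[fun ω => inner ℝ (X ω) (Y ω) | m] =ᵐ[μ] fun ω => inner ℝ (μ[X | m] ω) (Y ω) :=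
    condExp_bilin_of_stronglyMeasurable_right (innerSL ℝ) hY hXY hX
  rw [← integral_condExp hm]
  refine integral_eq_zero_of_ae ?_
  filter_upwards [hpull, hX_zero] with ω hω hω_zero
  rw [hω, hω_zero, Pi.zero_apply, inner_zero_left, Pi.zero_apply]

variable [MeasurableSpace E]

/-- `ξ` is a square-integrable martingale difference sequence for `ℱ` whose terms have second moment
at most `v`. The noise `ξ t` of step `t` is revealed at time `t + 1`, so that the filtration at time
`t` describes what the `t`-th iterate may depend on. -/
structure IsMartingaleNoise (ξ : Fin T → Ω → E) (ℱ : Filtration ℕ mΩ) (v : ℝ) (μ : Measure Ω) :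
    Prop where
  measurable : ∀ t : Fin T, Measurable[ℱ (t + 1)] (ξ t)
  memLp : ∀ t, MemLp (ξ t) 2 μ
  condExp_eq_zero : ∀ t : Fin T, μ[ξ t | ℱ t] =ᵐ[μ] 0
  integral_norm_sq_le : ∀ t, ∫ ω, ‖ξ t ω‖ ^ 2 ∂μ ≤ v

namespace IsMartingaleNoise

variable {ξ : Fin T → Ω → E} {ℱ : Filtration ℕ mΩ} {v : ℝ}

lemma const_smul [CompleteSpace E] [BorelSpace E] (h : IsMartingaleNoise ξ ℱ v μ) (c : ℝ) :
    IsMartingaleNoise (fun t ω => c • ξ t ω) ℱ (c ^ 2 * v) μ where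
  measurable t := (measurable_const_smul c).comp (h.measurable t)
  memLp t := (h.memLp t).const_smul c
  condExp_eq_zero t := by
    refine (condExp_smul c (ξ t) (ℱ t)).trans ?_
    filter_upwards [h.condExp_eq_zero t] with ω hω
    rw [Pi.smul_apply, hω, Pi.zero_apply, smul_zero]
  integral_norm_sq_le t := by
    simp only [norm_smul, mul_pow, Real.norm_eq_abs, sq_abs]
    rw [integral_const_mul]
    exact mul_le_mul_of_nonneg_left (h.integral_norm_sq_le t) (sq_nonneg c)

lemma integrable_norm_sq (h : IsMartingaleNoise ξ ℱ v μ) (t : Fin T) :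
    Integrable (fun ω => ‖ξ t ω‖ ^ 2) μ :=
  (h.memLp t).norm.integrable_sq

variable [IsFiniteMeasure μ]

lemma integrable (h : IsMartingaleNoise ξ ℱ v μ) (t : Fin T) : Integrable (ξ t) μ :=
  (h.memLp t).integrable one_le_two

lemma integrable_add_norm_sq (h : IsMartingaleNoise ξ ℱ v μ) (A : ℝ) (t : Fin T) :
    Integrable (fun ω => (A + ‖ξ t ω‖) ^ 2) μ :=
  ((memLp_const A).add (h.memLp t).norm).integrable_sq

lemma integral_add_norm_sq_le [IsProbabilityMeasure μ] (h : IsMartingaleNoise ξ ℱ v μ) (A : ℝ)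
    (t : Fin T) : ∫ ω, (A + ‖ξ t ω‖) ^ 2 ∂μ ≤ 2 * (A ^ 2 + v) := by
  have hbound : Integrable (fun ω => 2 * (A ^ 2 + ‖ξ t ω‖ ^ 2)) μ :=
    ((integrable_const _).add (h.integrable_norm_sq t)).const_mul 2
  calc ∫ ω, (A + ‖ξ t ω‖) ^ 2 ∂μ ≤ ∫ ω, 2 * (A ^ 2 + ‖ξ t ω‖ ^ 2) ∂μ :=
        integral_mono (h.integrable_add_norm_sq A t) hbound fun _ => add_sq_le
    _ = 2 * (A ^ 2 + ∫ ω, ‖ξ t ω‖ ^ 2 ∂μ) := by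
        rw [integral_const_mul, integral_add (integrable_const _) (h.integrable_norm_sq t),
          integral_const, probReal_univ, one_smul]
    _ ≤ 2 * (A ^ 2 + v) := by gcongr; exact h.integral_norm_sq_le t

lemma integrable_inner (h : IsMartingaleNoise ξ ℱ v μ) {t : Fin T} {Y : Ω → E}
    (hY : AEStronglyMeasurable Y μ) {R : ℝ} (hYR : ∀ ω, ‖Y ω‖ ≤ R) :
    Integrable (fun ω => inner ℝ (ξ t ω) (Y ω)) μ := by
  refine ((h.integrable t).norm.mul_const R).mono ((h.integrable t).1.inner hY) ?_
  refine Filter.Eventually.of_forall fun ω => ?_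
  refine (norm_inner_le_norm _ _).trans ?_
  rw [norm_mul, norm_norm]
  gcongr
  exact (hYR ω).trans (le_abs_self R)

lemma integral_inner_eq_zero [CompleteSpace E] (h : IsMartingaleNoise ξ ℱ v μ) {t : Fin T}
    {Y : Ω → E} (hY : StronglyMeasurable[ℱ t] Y) {R : ℝ} (hYR : ∀ ω, ‖Y ω‖ ≤ R) :
    ∫ ω, inner ℝ (ξ t ω) (Y ω) ∂μ = 0 :=
  integral_inner_eq_zero_of_condExp_eq_zero (ℱ.le t) (h.integrable t) (h.condExp_eq_zero t) hY
    (h.integrable_inner (hY.mono (ℱ.le t)).aestronglyMeasurable hYR)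

end IsMartingaleNoise

end MartingaleNoise

section Independent

variable {E : Type*} [MeasurableSpace E]

/-- The filtration whose `σ`-algebra at time `t` is generated by the `ξ s` with `s < t`, strictly:
`Filtration.natural` includes `s = t`. -/
def pastFiltration (ξ : Fin T → Ω → E) (hξ : ∀ t, Measurable (ξ t)) : Filtration ℕ mΩ where
  seq t := ⨆ s ∈ {s : Fin T | (s : ℕ) < t}, MeasurableSpace.comap (ξ s) inferInstance
  mono' _ _ hst := biSup_mono fun _ hs => lt_of_lt_of_le hs hst
  le' _ := iSup₂_le fun s _ => (hξ s).comap_le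

variable {ξ : Fin T → Ω → E}

lemma measurable_pastFiltration_succ (hξ : ∀ t, Measurable (ξ t)) (t : Fin T) :
    Measurable[pastFiltration ξ hξ (t + 1)] (ξ t) :=
  measurable_iff_comap_le.2 <|
    le_iSup₂_of_le (f := fun (s : Fin T) (_ : s ∈ {s : Fin T | (s : ℕ) < t + 1}) =>
      MeasurableSpace.comap (ξ s) inferInstance) t (Nat.lt_succ_self t) le_rfl

lemma indep_comap_pastFiltration (hξ : ∀ t, Measurable (ξ t)) (hind : iIndepFun ξ μ) (t : Fin T) :
    Indep (MeasurableSpace.comap (ξ t) inferInstance) (pastFiltration ξ hξ t) μ := by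
  have hdisj : Disjoint {t} {s : Fin T | (s : ℕ) < t} := by simp
  have h := indep_iSup_of_disjoint (fun s => (hξ s).comap_le) hind hdisj
  rwa [iSup_singleton] at h

lemma isMartingaleNoise_of_iIndepFun {E : Type*} [NormedAddCommGroup E] [InnerProductSpace ℝ E]
    [CompleteSpace E] [SecondCountableTopology E] [MeasurableSpace E] [BorelSpace E]
    {ξ : Fin T → Ω → E} {v : ℝ} (hξ : ∀ t, Measurable (ξ t)) (hind : iIndepFun ξ μ)
    (hLp : ∀ t, MemLp (ξ t) 2 μ) (hmean : ∀ t, ∫ ω, ξ t ω ∂μ = 0)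
    (hsq : ∀ t, ∫ ω, ‖ξ t ω‖ ^ 2 ∂μ ≤ v) :
    IsMartingaleNoise ξ (pastFiltration ξ hξ) v μ where
  measurable := measurable_pastFiltration_succ hξ
  memLp := hLp
  condExp_eq_zero t := by
    have := hind.isProbabilityMeasure
    refine (condExp_indep_eq (hξ t).comap_le ((pastFiltration ξ hξ).le t)
      (comap_measurable (ξ t)).stronglyMeasurable (indep_comap_pastFiltration hξ hind t)).trans ?_
    rw [hmean t]
    rfl
  integral_norm_sq_le := hsq

lemma iIndepFun_curry {ι κ 𝓧 : Type*} [MeasurableSpace 𝓧]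
    {X : ι × κ → Ω → 𝓧} (hX : ∀ p, Measurable (X p)) (hind : iIndepFun X μ) :
    iIndepFun (fun i ω j => X (i, j) ω) μ := by
  have := hind.isProbabilityMeasure
  have hprob (p : ι × κ) : IsProbabilityMeasure (μ.map (X p)) :=
    Measure.isProbabilityMeasure_map (hX p).aemeasurable
  have hjoint : Measurable fun ω p => X p ω := measurable_pi_lambda _ hX
  have hblock (i : ι) : Measurable fun ω j => X (i, j) ω :=
    measurable_pi_lambda _ fun j => hX (i, j)
  have hmap (i : ι) : μ.map (fun ω j => X (i, j) ω) =
      Measure.infinitePi fun j => μ.map (X (i, j)) :=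
    (hind.precomp (Prod.mk_right_injective i)).map_fun_eq_infinitePi_map fun j => hX (i, j)
  rw [iIndepFun_iff_map_fun_eq_infinitePi_map hblock]
  simp only [hmap]
  rw [← Measure.infinitePi_map_curry (μ := fun i j => μ.map (X (i, j))),
    ← hind.map_fun_eq_infinitePi_map hX, Measure.map_map (by fun_prop) hjoint]
  rfl

end Independent

section Gaussian

lemma memLp_two_of_map_eq_gaussianReal {x : Ω → ℝ} (hx : Measurable x)
    {a : ℝ} {v : NNReal} (hg : μ.map x = gaussianReal a v) : MemLp x 2 μ := by
  have h := memLp_id_gaussianReal' (μ := a) (v := v) 2 (by simp)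
  rwa [← hg, memLp_map_measure_iff (by fun_prop) hx.aemeasurable] at h

lemma integral_of_map_eq_gaussianReal {x : Ω → ℝ} (hx : Measurable x)
    {a : ℝ} {v : NNReal} (hg : μ.map x = gaussianReal a v) : ∫ ω, x ω ∂μ = a := by
  have h := integral_id_gaussianReal (μ := a) (v := v)
  rwa [← hg, integral_map hx.aemeasurable (by fun_prop)] at h

lemma integral_sq_of_map_eq_gaussianReal {x : Ω → ℝ} (hx : Measurable x)
    {v : NNReal} (hg : μ.map x = gaussianReal 0 v) : ∫ ω, x ω ^ 2 ∂μ = v := by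
  have h := variance_fun_id_gaussianReal (μ := 0) (v := v)
  rw [variance_of_integral_eq_zero (by fun_prop) integral_id_gaussianReal, ← hg,
    integral_map hx.aemeasurable (by fun_prop)] at h
  exact h

lemma isMartingaleNoise_of_gaussianReal {κ : Type*} [Fintype κ]
    {ξ : Fin T → Ω → EuclideanSpace ℝ κ} (hξ : ∀ t, Measurable (ξ t))
    (hind : iIndepFun (fun (p : Fin T × κ) ω => ξ p.1 ω p.2) μ)
    (hg : ∀ t k, μ.map (fun ω => ξ t ω k) = gaussianReal 0 1) :
    IsMartingaleNoise ξ (pastFiltration ξ hξ) (Fintype.card κ) μ := by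
  have hcoord (t : Fin T) (k : κ) : Measurable fun ω => ξ t ω k := by
    have := hξ t
    fun_prop
  have hLp (t : Fin T) (k : κ) : MemLp (fun ω => ξ t ω k) 2 μ :=
    memLp_two_of_map_eq_gaussianReal (hcoord t k) (hg t k)
  have hblocks : iIndepFun ξ μ :=
    (iIndepFun_curry (X := fun p ω => ξ p.1 ω p.2) (fun p => hcoord p.1 p.2) hind).comp
      (fun _ => WithLp.toLp 2) fun _ => (MeasurableEquiv.toLp 2 (κ → ℝ)).measurable
  have := hind.isProbabilityMeasure
  refine isMartingaleNoise_of_iIndepFun hξ hblocks (fun t => memLp_piLp_iff.2 (hLp t))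
    (fun t => ?_) fun t => ?_
  · ext k
    rw [eval_integral_piLp fun k => (hLp t k).integrable one_le_two,
      integral_of_map_eq_gaussianReal (hcoord t k) (hg t k), PiLp.zero_apply]
  · simp only [EuclideanSpace.real_norm_sq_eq]
    rw [integral_finsetSum _ fun k _ => (hLp t k).integrable_sq]
    simp only [integral_sq_of_map_eq_gaussianReal (hcoord t _) (hg t _), NNReal.coe_one,
      Finset.sum_const, Finset.card_univ, nsmul_eq_mul, mul_one, le_refl]

end Gaussian

end Noise

section BoundedSet

variable {E : Type*} [NormedAddCommGroup E] {C : Set E} {D : ℝ}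
  {Ω : Type*} {mΩ : MeasurableSpace Ω} {μ : Measure Ω} {X Y : Ω → E}

lemma integrable_norm_sub_sq [IsFiniteMeasure μ] (hCD : ∀ x ∈ C, ∀ y ∈ C, ‖x - y‖ ≤ D)
    (hX : AEStronglyMeasurable X μ) (hXC : ∀ ω, X ω ∈ C)
    (hY : AEStronglyMeasurable Y μ) (hYC : ∀ ω, Y ω ∈ C) :
    Integrable (fun ω => ‖X ω - Y ω‖ ^ 2) μ :=
  Integrable.of_bound ((hX.sub hY).norm.pow 2) (D ^ 2) <| Filter.Eventually.of_forall fun ω => by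
    rw [norm_pow, norm_norm]
    exact pow_le_pow_left₀ (norm_nonneg _) (hCD _ (hXC ω) _ (hYC ω)) 2

lemma integral_norm_sub_sq_le [IsProbabilityMeasure μ] (hCD : ∀ x ∈ C, ∀ y ∈ C, ‖x - y‖ ≤ D)
    (hX : AEStronglyMeasurable X μ) (hXC : ∀ ω, X ω ∈ C)
    (hY : AEStronglyMeasurable Y μ) (hYC : ∀ ω, Y ω ∈ C) :
    ∫ ω, ‖X ω - Y ω‖ ^ 2 ∂μ ≤ D ^ 2 := by
  have h := integral_mono (integrable_norm_sub_sq hCD hX hXC hY hYC) (integrable_const (D ^ 2))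
    fun ω => pow_le_pow_left₀ (norm_nonneg _) (hCD _ (hXC ω) _ (hYC ω)) 2
  rwa [integral_const, probReal_univ, one_smul] at h

variable [InnerProductSpace ℝ E] {P : E → E} {F : E → ℝ} {g : E → E} {A : ℝ}

lemma HasBoundedSubgradientOn.integrable_comp [IsFiniteMeasure μ]
    (hF : HasBoundedSubgradientOn C F g A) (hC : Convex ℝ C) (hP : IsMetricProjection C P)
    (hCD : ∀ x ∈ C, ∀ y ∈ C, ‖x - y‖ ≤ D) (hX : AEStronglyMeasurable X μ) (hXC : ∀ ω, X ω ∈ C) :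
    Integrable (fun ω => F (X ω)) μ := by
  have hFP : (fun ω => (F ∘ P) (X ω)) = fun ω => F (X ω) :=
    funext fun ω => congrArg F (hP.apply_of_mem (hXC ω))
  refine Integrable.of_bound (hFP ▸ (hF.continuous_comp hC hP).comp_aestronglyMeasurable hX)
    (|A| * D + ‖F (P 0)‖) (Filter.Eventually.of_forall fun ω => ?_)
  have hosc : ‖F (X ω) - F (P 0)‖ ≤ |A| * D := by
    refine (hF.abs_sub_le (hXC ω) (hP.mem 0)).trans ?_
    gcongr
    · exact le_abs_self A
    · exact hCD _ (hXC ω) _ (hP.mem 0)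
  linarith [norm_le_norm_sub_add (F (X ω)) (F (P 0))]

end BoundedSet

section NoisyDescent

variable {E : Type*} [NormedAddCommGroup E] [InnerProductSpace ℝ E] [MeasurableSpace E]
  {Ω : Type*} {mΩ : MeasurableSpace Ω} {T : ℕ}

/-- `θ` is a run of `T` steps of projected subgradient descent for `F` over the convex set `C` of
diameter at most `D`, with step sizes `η`, subgradients `g` perturbed by the martingale noise `ξ`,
and an initial point that is known at time `0`. -/
structure IsNoisyDescent (C : Set E) (D : ℝ) (P : E → E) (F : E → ℝ) (g : E → E) (A : ℝ)
    (ξ : Fin T → Ω → E) (ℱ : Filtration ℕ mΩ) (v : ℝ) (μ : Measure Ω) (η : ℕ → ℝ)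
    (θ : ℕ → Ω → E) : Prop where
  convex : Convex ℝ C
  norm_sub_le : ∀ x ∈ C, ∀ y ∈ C, ‖x - y‖ ≤ D
  isMetricProjection : IsMetricProjection C P
  subgradient : HasBoundedSubgradientOn C F g A
  measurable_subgradient : Measurable g
  noise : IsMartingaleNoise ξ ℱ v μ
  measurable_zero : Measurable[ℱ 0] (θ 0)
  zero_mem : ∀ ω, θ 0 ω ∈ C
  succ : ∀ (t : Fin T) ω, θ (t + 1) ω = P (θ t ω - η t • (g (θ t ω) + ξ t ω))

namespace IsNoisyDescent

variable {C : Set E} {D : ℝ} {P : E → E} {F : E → ℝ} {g : E → E} {A : ℝ}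
  {ξ : Fin T → Ω → E} {ℱ : Filtration ℕ mΩ} {v : ℝ} {μ : Measure Ω} {η : ℕ → ℝ}
  {θ : ℕ → Ω → E}

lemma mem (h : IsNoisyDescent C D P F g A ξ ℱ v μ η θ) {t : ℕ} (ht : t ≤ T) (ω : Ω) :
    θ t ω ∈ C := by
  cases t with
  | zero => exact h.zero_mem ω
  | succ t => exact h.succ ⟨t, ht⟩ ω ▸ h.isMetricProjection.mem _

lemma inner_step_le (h : IsNoisyDescent C D P F g A ξ ℱ v μ η θ) (t : Fin T) (ω : Ω) :
    inner ℝ (g (θ t ω) + ξ t ω) (θ t ω - θ (t + 1) ω) ≤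
      (A + ‖ξ t ω‖) * ‖θ t ω - θ (t + 1) ω‖ := by
  rw [inner_add_left, add_mul]
  exact add_le_add (h.subgradient.inner_le _ (h.mem t.2.le ω) _ (h.mem t.2 ω))
    (real_inner_le_norm _ _)

lemma norm_succ_sub_sq_le (h : IsNoisyDescent C D P F g A ξ ℱ v μ η θ) {t : Fin T}
    (hη : 0 ≤ η t) (ω : Ω) {z : E} (hz : z ∈ C) :
    ‖θ (t + 1) ω - z‖ ^ 2 ≤ ‖θ t ω - z‖ ^ 2 - 2 * η t * (F (θ t ω) - F z)
      - 2 * η t * inner ℝ (ξ t ω) (θ t ω - z) + η t ^ 2 * (A + ‖ξ t ω‖) ^ 2 := by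
  have hstep := h.isMetricProjection.norm_step_sub_sq_le h.convex hη hz
    (h.succ t ω ▸ h.inner_step_le t ω)
  rw [← h.succ t ω, inner_add_left] at hstep
  have hsub := mul_le_mul_of_nonneg_left
    (h.subgradient.sub_le_inner _ (h.mem t.2.le ω) z hz) hη
  linarith

lemma apply_succ_sub_le (h : IsNoisyDescent C D P F g A ξ ℱ v μ η θ) (hA : 0 ≤ A) {t : Fin T}
    (hη : 0 ≤ η t) (ω : Ω) : F (θ (t + 1) ω) - F (θ t ω) ≤ η t * (A + ‖ξ t ω‖) ^ 2 := by
  have hmove := h.isMetricProjection.norm_sub_step_le h.convex hη (by positivity)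
    (h.mem t.2.le ω) (h.succ t ω ▸ h.inner_step_le t ω)
  rw [← h.succ t ω, norm_sub_rev] at hmove
  calc F (θ (t + 1) ω) - F (θ t ω)
      ≤ A * ‖θ (t + 1) ω - θ t ω‖ := h.subgradient.sub_le (h.mem t.2 ω) (h.mem t.2.le ω)
    _ ≤ (A + ‖ξ t ω‖) * (η t * (A + ‖ξ t ω‖)) := by
        gcongr
        exact le_add_of_nonneg_right (norm_nonneg _)
    _ = η t * (A + ‖ξ t ω‖) ^ 2 := by ring

variable [BorelSpace E] [SecondCountableTopology E]

lemma measurable (h : IsNoisyDescent C D P F g A ξ ℱ v μ η θ) {t : ℕ} (ht : t ≤ T) :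
    Measurable[ℱ t] (θ t) := by
  induction t with
  | zero => exact h.measurable_zero
  | succ t ih =>
    have hθ : Measurable[ℱ (t + 1)] (θ t) := (ih (by omega)).mono (ℱ.mono t.le_succ) le_rfl
    have hξ : Measurable[ℱ (t + 1)] (ξ ⟨t, ht⟩) := h.noise.measurable ⟨t, ht⟩
    rw [funext (h.succ ⟨t, ht⟩)]
    exact (h.isMetricProjection.lipschitzWith h.convex).continuous.measurable.comp
      (hθ.sub (((h.measurable_subgradient.comp hθ).add hξ).const_smul (η t)))

lemma aestronglyMeasurable (h : IsNoisyDescent C D P F g A ξ ℱ v μ η θ) {t : ℕ} (ht : t ≤ T) :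
    AEStronglyMeasurable (θ t) μ :=
  ((h.measurable ht).mono (ℱ.le t) le_rfl).aestronglyMeasurable

lemma integrable_apply [IsFiniteMeasure μ] (h : IsNoisyDescent C D P F g A ξ ℱ v μ η θ) {t : ℕ}
    (ht : t ≤ T) : Integrable (fun ω => F (θ t ω)) μ :=
  h.subgradient.integrable_comp h.convex h.isMetricProjection h.norm_sub_le
    (h.aestronglyMeasurable ht) (h.mem ht)

variable [IsProbabilityMeasure μ]

lemma integral_succ_sub_le (h : IsNoisyDescent C D P F g A ξ ℱ v μ η θ) (hA : 0 ≤ A) {t : Fin T}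
    (hη : 0 ≤ η t) :
    ∫ ω, F (θ (t + 1) ω) ∂μ - ∫ ω, F (θ t ω) ∂μ ≤ η t * (2 * (A ^ 2 + v)) := by
  calc ∫ ω, F (θ (t + 1) ω) ∂μ - ∫ ω, F (θ t ω) ∂μ
      = ∫ ω, (F (θ (t + 1) ω) - F (θ t ω)) ∂μ :=
        (integral_sub (h.integrable_apply t.2) (h.integrable_apply t.2.le)).symm
    _ ≤ ∫ ω, η t * (A + ‖ξ t ω‖) ^ 2 ∂μ :=
        integral_mono ((h.integrable_apply t.2).sub (h.integrable_apply t.2.le))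
          ((h.noise.integrable_add_norm_sq A t).const_mul _) (h.apply_succ_sub_le hA hη)
    _ = η t * ∫ ω, (A + ‖ξ t ω‖) ^ 2 ∂μ := integral_const_mul _ _
    _ ≤ η t * (2 * (A ^ 2 + v)) := by
        gcongr
        exact h.noise.integral_add_norm_sq_le A t

variable [CompleteSpace E]

lemma mul_integral_sub_le (h : IsNoisyDescent C D P F g A ξ ℱ v μ η θ) {t : Fin T}
    (hη : 0 ≤ η t) {Z : Ω → E} (hZ : Measurable[ℱ t] Z) (hZC : ∀ ω, Z ω ∈ C) :
    2 * η t * (∫ ω, F (θ t ω) ∂μ - ∫ ω, F (Z ω) ∂μ) ≤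
      ∫ ω, ‖θ t ω - Z ω‖ ^ 2 ∂μ - ∫ ω, ‖θ (t + 1) ω - Z ω‖ ^ 2 ∂μ
        + η t ^ 2 * (2 * (A ^ 2 + v)) := by
  have hZm : AEStronglyMeasurable Z μ := (hZ.mono (ℱ.le t) le_rfl).aestronglyMeasurable
  have hdist {s : ℕ} (hs : s ≤ T) : Integrable (fun ω => ‖θ s ω - Z ω‖ ^ 2) μ :=
    integrable_norm_sub_sq h.norm_sub_le (h.aestronglyMeasurable hs) (h.mem hs) hZm hZC
  have hFZ : Integrable (fun ω => F (Z ω)) μ :=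
    h.subgradient.integrable_comp h.convex h.isMetricProjection h.norm_sub_le hZm hZC
  have hF := h.integrable_apply t.2.le
  have hZD (ω : Ω) : ‖θ t ω - Z ω‖ ≤ D := h.norm_sub_le _ (h.mem t.2.le ω) _ (hZC ω)
  have hinner : Integrable (fun ω => inner ℝ (ξ t ω) (θ t ω - Z ω)) μ :=
    h.noise.integrable_inner ((h.aestronglyMeasurable t.2.le).sub hZm) hZD
  have hinner_zero : ∫ ω, inner ℝ (ξ t ω) (θ t ω - Z ω) ∂μ = 0 :=
    h.noise.integral_inner_eq_zero ((h.measurable t.2.le).sub hZ).stronglyMeasurable hZD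
  have hexcess : Integrable (fun ω => F (θ t ω) - F (Z ω)) μ := hF.sub hFZ
  have hgap : Integrable (fun ω => ‖θ t ω - Z ω‖ ^ 2 - 2 * η t * (F (θ t ω) - F (Z ω))) μ :=
    (hdist t.2.le).sub (hexcess.const_mul (2 * η t))
  have hdescent : Integrable (fun ω => ‖θ t ω - Z ω‖ ^ 2 - 2 * η t * (F (θ t ω) - F (Z ω))
      - 2 * η t * inner ℝ (ξ t ω) (θ t ω - Z ω)) μ := hgap.sub (hinner.const_mul (2 * η t))
  have hnoise := (h.noise.integrable_add_norm_sq A t).const_mul (η t ^ 2)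
  have hmono := integral_mono (hdist t.2) (hdescent.add hnoise)
    fun ω => h.norm_succ_sub_sq_le hη ω (hZC ω)
  have hvar := mul_le_mul_of_nonneg_left (h.noise.integral_add_norm_sq_le A t) (sq_nonneg (η t))
  rw [integral_add' hdescent hnoise, integral_sub hgap (hinner.const_mul _),
    integral_sub (hdist t.2.le) (hexcess.const_mul _), integral_const_mul,
    integral_const_mul, integral_const_mul, integral_sub hF hFZ, hinner_zero] at hmono
  linarith

lemma sum_integral_sub_le {G : ℝ}
    (h : IsNoisyDescent C D P F g A ξ ℱ v μ (fun t => D / (G * √(t + 1))) θ) (hD : 0 < D)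
    (hG : 0 < G) (hAv : A ^ 2 + v ≤ G ^ 2) {s : ℕ} (hsT : s < T) {Z : Ω → E}
    (hZ : Measurable[ℱ s] Z) (hZC : ∀ ω, Z ω ∈ C) (hZs : s = 0 ∨ Z = θ s) :
    ∑ t ∈ Finset.Ico s T, (∫ ω, F (θ t ω) ∂μ - ∫ ω, F (Z ω) ∂μ) ≤
      (T - s) * (5 / 2 * (D * G) / √T) := by
  have hZm : AEStronglyMeasurable Z μ := (hZ.mono (ℱ.le s) le_rfl).aestronglyMeasurable
  have hpotential : √s * (G / (2 * D) * ∫ ω, ‖θ s ω - Z ω‖ ^ 2 ∂μ) = 0 := by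
    rcases hZs with rfl | rfl <;> simp
  have hregret := sum_Ico_le_sub_mul_div_sqrt (R := G * D / 2) (K := D * G)
    (b := fun t => ∫ ω, F (θ t ω) ∂μ - ∫ ω, F (Z ω) ∂μ)
    (e := fun t => G / (2 * D) * ∫ ω, ‖θ t ω - Z ω‖ ^ 2 ∂μ)
    (by positivity) (by positivity) hsT hpotential
    (mul_nonneg (by positivity) (integral_nonneg fun _ => sq_nonneg _)) ?_ ?_
  · exact hregret.trans_eq (by ring)
  · intro t _ ht
    calc G / (2 * D) * ∫ ω, ‖θ t ω - Z ω‖ ^ 2 ∂μ ≤ G / (2 * D) * D ^ 2 := by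
          gcongr
          exact integral_norm_sub_sq_le h.norm_sub_le (h.aestronglyMeasurable ht.le)
            (h.mem ht.le) hZm hZC
      _ = G * D / 2 := by field_simp
  · intro t hst ht
    set r := √((t : ℝ) + 1)
    have hr : 0 < r := by positivity
    have hstep : 2 * (D / (G * r)) * (∫ ω, F (θ t ω) ∂μ - ∫ ω, F (Z ω) ∂μ) ≤
        ∫ ω, ‖θ t ω - Z ω‖ ^ 2 ∂μ - ∫ ω, ‖θ (t + 1) ω - Z ω‖ ^ 2 ∂μ
          + (D / (G * r)) ^ 2 * (2 * G ^ 2) :=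
      (h.mul_integral_sub_le (t := ⟨t, ht⟩) (by positivity) (hZ.mono (ℱ.mono hst) le_rfl)
        hZC).trans (by gcongr)
    generalize ∫ ω, F (θ t ω) ∂μ - ∫ ω, F (Z ω) ∂μ = gap at hstep ⊢
    clear_value r
    field_simp at hstep ⊢
    linarith

theorem integral_last_sub_le {G : ℝ}
    (h : IsNoisyDescent C D P F g A ξ ℱ v μ (fun t => D / (G * √(t + 1))) θ) (hD : 0 < D)
    (hG : 0 < G) (hA : 0 ≤ A) (hAv : A ^ 2 + v ≤ G ^ 2) (hT : 1 ≤ T) {z : E} (hz : z ∈ C) :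
    ∫ ω, F (θ T ω) ∂μ - F z ≤ 7 * (D * G / √T) * (1 + Real.log T) := by
  obtain ⟨n, rfl⟩ : ∃ n, T = n + 1 := ⟨T - 1, by omega⟩
  have hlog : 0 ≤ Real.log (n + 1 : ℕ) := Real.log_natCast_nonneg _
  rw [Nat.cast_succ] at hlog ⊢
  set q := D * G / √((n : ℝ) + 1) with hq
  have hq_nonneg : 0 ≤ q := by positivity
  have hsuffix (s : ℕ) (hs : s < n) :
      ∑ t ∈ Finset.Ico s (n + 1), (∫ ω, F (θ t ω) ∂μ - ∫ ω, F (θ s ω) ∂μ) ≤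
        (n + 1 - s) * (5 / 2 * q) := by
    have := h.sum_integral_sub_le hD hG hAv (by omega) (h.measurable (by omega))
      (h.mem (by omega)) (.inr rfl) (s := s)
    rwa [Nat.cast_succ, mul_div_assoc] at this
  have hsum : ∑ t ∈ Finset.range (n + 1), (∫ ω, F (θ t ω) ∂μ - F z) ≤ (n + 1) * (5 / 2 * q) := by
    have := h.sum_integral_sub_le hD hG hAv n.succ_pos measurable_const (fun _ => hz) (.inl rfl)
    rwa [Nat.cast_succ, mul_div_assoc, Nat.Ico_zero_eq_range, Nat.cast_zero, sub_zero,
      integral_const, probReal_univ, one_smul] at this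
  have hlast : ∫ ω, F (θ (n + 1) ω) ∂μ - ∫ ω, F (θ n ω) ∂μ ≤ 2 * q := by
    calc ∫ ω, F (θ (n + 1) ω) ∂μ - ∫ ω, F (θ n ω) ∂μ
        ≤ D / (G * √((n : ℝ) + 1)) * (2 * (A ^ 2 + v)) :=
          h.integral_succ_sub_le hA (t := Fin.last n) (by positivity)
      _ ≤ D / (G * √((n : ℝ) + 1)) * (2 * G ^ 2) := by gcongr
      _ = 2 * q := by rw [hq]; field_simp
  have hiterate := le_add_mul_one_add_harmonic hsuffix hsum
  have hharmonic := mul_le_mul_of_nonneg_left (harmonic_le_one_add_log_succ n) hq_nonneg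
  nlinarith

end IsNoisyDescent

end NoisyDescent

section MultiTask

lemma hasBoundedSubgradientOn_gradient_sum {E : Type*} [NormedAddCommGroup E]
    [InnerProductSpace ℝ E] [CompleteSpace E] {κ : Type*} [Fintype κ] {C : Set E} {ℓ : κ → E → ℝ}
    {Γ : ℝ} (hconv : ∀ j, ConvexOn ℝ C (ℓ j)) (hdiff : ∀ j, Differentiable ℝ (ℓ j))
    (hlip : ∀ j, ∀ x ∈ C, ∀ y ∈ C, |ℓ j x - ℓ j y| ≤ Γ * ‖x - y‖) :
    HasBoundedSubgradientOn C (fun x => ∑ j, ℓ j x) (gradient fun x => ∑ j, ℓ j x)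
      (Fintype.card κ * Γ) := by
  have h := HasBoundedSubgradientOn.sum (s := Finset.univ) fun j _ =>
    HasBoundedSubgradientOn.of_convexOn (hconv j) (fun x _ => hdiff j x) (hlip j)
  rwa [Finset.sum_const, Finset.card_univ, nsmul_eq_mul,
    ← funext fun x => gradient_fun_sum fun j _ => hdiff j x] at h

lemma two_mul_le_ceil_mul {d S : ℝ} (hd : 0 < d) (hS : 0 < S) (N : ℝ) :
    2 * N ≤ ⌈2 / d * N / S⌉₊ * (d * S) := by
  calc 2 * N = 2 / d * N / S * (d * S) := by field_simp
    _ ≤ ⌈2 / d * N / S⌉₊ * (d * S) := by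
        gcongr
        exact Nat.le_ceil _

lemma sum_sqrt_sq_div_add_le {ι : Type*} [Fintype ι] {n w : ι → ℝ} {d T : ℝ} (hd : 0 ≤ d)
    (hT : 0 < T) (hT_ge : 2 * ∑ i, n i ^ 2 ≤ T * (d * ∑ i, 1 / w i ^ 2)) :
    ∑ i, √(n i ^ 2 / T + d / 2 * (1 / w i ^ 2)) ≤
      √(Fintype.card ι * d * ∑ i, 1 / w i ^ 2) := by
  have hbalance : (∑ i, n i ^ 2) / T ≤ d / 2 * ∑ i, 1 / w i ^ 2 := by
    rw [div_le_iff₀ hT]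
    linarith
  refine Real.le_sqrt_of_sq_le ?_
  calc (∑ i, √(n i ^ 2 / T + d / 2 * (1 / w i ^ 2))) ^ 2
      ≤ Fintype.card ι * ∑ i, √(n i ^ 2 / T + d / 2 * (1 / w i ^ 2)) ^ 2 :=
        sq_sum_le_card_mul_sum_sq
    _ = Fintype.card ι * ((∑ i, n i ^ 2) / T + d / 2 * ∑ i, 1 / w i ^ 2) := by
        congr 1
        rw [Finset.sum_div, Finset.mul_sum, ← Finset.sum_add_distrib]
        exact Finset.sum_congr rfl fun i _ => Real.sq_sqrt (by positivity)
    _ ≤ Fintype.card ι * (d * ∑ i, 1 / w i ^ 2) := by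
        gcongr
        linarith
    _ = Fintype.card ι * d * ∑ i, 1 / w i ^ 2 := (mul_assoc _ _ _).symm

variable {E : Type*} [NormedAddCommGroup E] [InnerProductSpace ℝ E] [CompleteSpace E]
  [SecondCountableTopology E] [MeasurableSpace E] [BorelSpace E] {C : Set E} {D Γ d : ℝ}
  {P : E → E} {T : ℕ} {Ω : Type*} {mΩ : MeasurableSpace Ω} {μ : Measure Ω} [IsProbabilityMeasure μ]

lemma integral_weighted_last_sub_le (hC : Convex ℝ C) (hD : 0 < D)
    (hCD : ∀ x ∈ C, ∀ y ∈ C, ‖x - y‖ ≤ D) (hP : IsMetricProjection C P) (hΓ : 0 < Γ) (hd : 0 < d)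
    (hT : 1 ≤ T) {F : E → ℝ} {g : E → E} {n w : ℝ} (hn : 0 ≤ n) (hw : 0 < w)
    (hF : HasBoundedSubgradientOn C F g (n * Γ)) (hg : Measurable g) {ξ : Fin T → Ω → E}
    {ℱ : Filtration ℕ mΩ} (hξ : IsMartingaleNoise ξ ℱ d μ) {θ : ℕ → Ω → E}
    (hθ_meas : Measurable[ℱ 0] (θ 0)) (hθ_mem : ∀ ω, θ 0 ω ∈ C)
    (hθ_succ : ∀ (t : Fin T) ω, θ (t + 1) ω =
      P (θ t ω - (D / (Γ * √(w ^ 2 * n ^ 2 + T * d / 2) * √(t + 1))) •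
        (w • g (θ t ω) + (Γ * √(T / 2)) • ξ t ω)))
    {z : E} (hz : z ∈ C) :
    ∫ ω, F (θ T ω) ∂μ - F z ≤
      7 * D * Γ * (1 + Real.log T) * √(n ^ 2 / T + d / 2 * (1 / w ^ 2)) := by
  have hT_pos : (0 : ℝ) < T := by exact_mod_cast hT
  set Q := √(w ^ 2 * n ^ 2 + T * d / 2)
  have hQ_pos : 0 < Q := by positivity
  have hQ_sq : Q ^ 2 = w ^ 2 * n ^ 2 + T * d / 2 := Real.sq_sqrt (by positivity)
  have hrun : IsNoisyDescent C D P (fun x => w * F x) (fun x => w • g x) (w * (n * Γ))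
      (fun t ω => (Γ * √(T / 2)) • ξ t ω) ℱ ((Γ * √(T / 2)) ^ 2 * d) μ
      (fun t => D / (Γ * Q * √(t + 1))) θ :=
    ⟨hC, hCD, hP, hF.const_mul hw.le, hg.const_smul w, hξ.const_smul _, hθ_meas, hθ_mem, hθ_succ⟩
  have hmoment : (w * (n * Γ)) ^ 2 + (Γ * √(T / 2)) ^ 2 * d ≤ (Γ * Q) ^ 2 := by
    rw [mul_pow Γ Q, hQ_sq, mul_pow Γ, Real.sq_sqrt (by positivity)]
    exact le_of_eq (by ring)
  have hscale : √(n ^ 2 / T + d / 2 * (1 / w ^ 2)) = Q / (w * √T) := by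
    rw [Real.sqrt_eq_iff_eq_sq (by positivity) (by positivity), div_pow, hQ_sq, mul_pow,
      Real.sq_sqrt hT_pos.le]
    field_simp
  have hlast := hrun.integral_last_sub_le hD (by positivity) (by positivity) hmoment hT hz
  rw [integral_const_mul, ← mul_sub] at hlast
  refine le_of_mul_le_mul_left (hlast.trans_eq ?_) hw
  rw [hscale]
  field_simp

theorem stmt8_general {ι : Type*} [Fintype ι] (hC : Convex ℝ C) (hD : 0 < D)
    (hCD : ∀ x ∈ C, ∀ y ∈ C, ‖x - y‖ ≤ D) (hP : IsMetricProjection C P) (hΓ : 0 < Γ) (hd : 0 < d)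
    {L : ι → E → ℝ} {g : ι → E → E} {n w : ι → ℝ} (hn : ∀ i, 0 ≤ n i) (hw : ∀ i, 0 < w i)
    (hT : 1 ≤ T) (hT_ge : 2 * ∑ i, n i ^ 2 ≤ T * (d * ∑ i, 1 / w i ^ 2))
    (hL : ∀ i, HasBoundedSubgradientOn C (L i) (g i) (n i * Γ)) (hg : ∀ i, Measurable (g i))
    {ξ : ι → Fin T → Ω → E} {ℱ : ι → Filtration ℕ mΩ}
    (hξ : ∀ i, IsMartingaleNoise (ξ i) (ℱ i) d μ) {θ : ι → ℕ → Ω → E}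
    (hθ_meas : ∀ i, Measurable[ℱ i 0] (θ i 0)) (hθ_mem : ∀ i ω, θ i 0 ω ∈ C)
    (hθ_succ : ∀ i (t : Fin T) ω, θ i (t + 1) ω =
      P (θ i t ω - (D / (Γ * √(w i ^ 2 * n i ^ 2 + T * d / 2) * √(t + 1))) •
        (w i • g i (θ i t ω) + (Γ * √(T / 2)) • ξ i t ω)))
    {z : ι → E} (hz : ∀ i, z i ∈ C) :
    ∑ i, ∫ ω, L i (θ i T ω) ∂μ - ∑ i, L i (z i) ≤
      7 * D * Γ * (1 + Real.log T) * √(Fintype.card ι * d * ∑ i, 1 / w i ^ 2) := by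
  have hfactor : 0 ≤ 7 * D * Γ * (1 + Real.log T) :=
    mul_nonneg (by positivity) (add_nonneg zero_le_one (Real.log_natCast_nonneg T))
  calc ∑ i, ∫ ω, L i (θ i T ω) ∂μ - ∑ i, L i (z i)
      = ∑ i, (∫ ω, L i (θ i T ω) ∂μ - L i (z i)) := (Finset.sum_sub_distrib _ _).symm
    _ ≤ ∑ i, 7 * D * Γ * (1 + Real.log T) * √(n i ^ 2 / T + d / 2 * (1 / w i ^ 2)) :=
        Finset.sum_le_sum fun i _ =>
          integral_weighted_last_sub_le hC hD hCD hP hΓ hd hT (hn i) (hw i) (hL i) (hg i) (hξ i)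
            (hθ_meas i) (hθ_mem i) (hθ_succ i) (hz i)
    _ = 7 * D * Γ * (1 + Real.log T) * ∑ i, √(n i ^ 2 / T + d / 2 * (1 / w i ^ 2)) :=
        (Finset.mul_sum _ _ _).symm
    _ ≤ 7 * D * Γ * (1 + Real.log T) * √(Fintype.card ι * d * ∑ i, 1 / w i ^ 2) :=
        mul_le_mul_of_nonneg_left (sum_sqrt_sq_div_add_le hd.le (by exact_mod_cast hT) hT_ge)
          hfactor

end MultiTask

/-- Utility of task-weighted noisy gradient descent, Lipschitz convex case (Theorem 4(a)):
there is a universal constant `K > 0` such that, with per-example losses `ℓ i j` convex,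
differentiable and `Γ`-Lipschitz on a compact convex `C` of diameter `D`, task objectives
`L i = ∑ j, ℓ i j` minimized over `C` at `θ* i`, positive task weights `w i`,
`T = ⌈(2/d) (∑ i, nᵢ²)/(∑ i, 1/wᵢ²)⌉`, independent standard Gaussian noise vectors
`ξ i t` (i.i.d. `N(0,1)` coordinates), and the noisy projected GD iterates with step sizes
`η i t = D/(Γ √(wᵢ² nᵢ² + T d/2) √t)`, the total excess empirical risk of the final
iterates is at most `K D Γ (1 + log T) √(m d ∑ i, 1/wᵢ²)`. -/
theorem stmt8 :
    ∃ K : ℝ, 0 < K ∧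
      ∀ (d m : ℕ), 1 ≤ d → 1 ≤ m →
      ∀ nn : Fin m → ℕ, (∀ i, 1 ≤ nn i) →
      ∀ Γ : ℝ, 0 < Γ →
      ∀ C : Set (EuclideanSpace ℝ (Fin d)), C.Nonempty → IsCompact C → Convex ℝ C →
      ∀ D : ℝ, 0 < D → Metric.diam C = D →
      ∀ ℓ : (i : Fin m) → Fin (nn i) → EuclideanSpace ℝ (Fin d) → ℝ,
        (∀ i j, ConvexOn ℝ Set.univ (ℓ i j)) →
        (∀ i j, Differentiable ℝ (ℓ i j)) →
        (∀ i j, ∀ x ∈ C, ∀ y ∈ C, |ℓ i j x - ℓ i j y| ≤ Γ * ‖x - y‖) →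
      ∀ θstar : Fin m → EuclideanSpace ℝ (Fin d),
        (∀ i, θstar i ∈ C) → (∀ i, ∀ y ∈ C, (∑ j, ℓ i j (θstar i)) ≤ ∑ j, ℓ i j y) →
      ∀ w : Fin m → ℝ, (∀ i, 0 < w i) →
      ∀ T : ℕ, T = ⌈(2 / (d : ℝ)) * (∑ i, (nn i : ℝ) ^ 2) / (∑ i, 1 / w i ^ 2)⌉₊ →
      ∀ (Ω : Type) (_ : MeasureSpace Ω), IsProbabilityMeasure (ℙ : Measure Ω) →
      ∀ ξ : Fin m → Fin T → Ω → EuclideanSpace ℝ (Fin d),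
        (∀ i t, Measurable (ξ i t)) →
        iIndepFun (m := fun _ => (inferInstance : MeasurableSpace ℝ))
          (fun p : (Fin m × Fin T) × Fin d => fun ω => ξ p.1.1 p.1.2 ω p.2) ℙ →
        (∀ i t k, Measure.map (fun ω => ξ i t ω k) ℙ = gaussianReal 0 1) →
      ∀ proj : EuclideanSpace ℝ (Fin d) → EuclideanSpace ℝ (Fin d),
        (∀ x, proj x ∈ C ∧ ∀ y ∈ C, ‖x - proj x‖ ≤ ‖x - y‖) →
      ∀ θ : Fin m → ℕ → Ω → EuclideanSpace ℝ (Fin d),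
        (∀ i, ∃ θ0 ∈ C, θ i 0 = fun _ => θ0) →
        (∀ i, ∀ t : ℕ, (ht : t < T) →
          θ i (t + 1) = fun ω =>
            proj (θ i t ω -
              (D / (Γ * Real.sqrt (w i ^ 2 * (nn i : ℝ) ^ 2 + T * d / 2) *
                  Real.sqrt (t + 1))) •
                (w i • gradient (fun x => ∑ j, ℓ i j x) (θ i t ω) +
                  (Γ * Real.sqrt (T / 2)) • ξ i ⟨t, ht⟩ ω))) →
      (∑ i, ∫ ω, (∑ j, ℓ i j (θ i T ω)) ∂(ℙ : Measure Ω)) - (∑ i, ∑ j, ℓ i j (θstar i)) ≤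
        K * D * Γ * (1 + Real.log T) * Real.sqrt (m * d * ∑ i, 1 / w i ^ 2) := by
  refine ⟨7, by norm_num, ?_⟩
  intro d m hd hm nn hnn Γ hΓ C _ hC_compact hC_convex D hD hdiam ℓ hconv hdiff hlip θstar hθstar _
    w hw T hT Ω _ _ ξ hξ hind hgauss proj hproj θ hθ_zero hθ_succ
  have hS : 0 < ∑ i, 1 / w i ^ 2 :=
    Finset.sum_pos (fun i _ => one_div_pos.2 (pow_pos (hw i) 2)) ⟨⟨0, hm⟩, Finset.mem_univ _⟩
  have hN : 0 < ∑ i, (nn i : ℝ) ^ 2 :=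
    Finset.sum_pos (fun i _ => pow_pos (Nat.cast_pos.2 (hnn i)) 2) ⟨⟨0, hm⟩, Finset.mem_univ _⟩
  have hd_pos : (0 : ℝ) < d := Nat.cast_pos.2 hd
  choose θ₀ hθ₀ hθ_zero using hθ_zero
  have hCD (x) (hx : x ∈ C) (y) (hy : y ∈ C) : ‖x - y‖ ≤ D :=
    hdiam ▸ dist_eq_norm x y ▸ Metric.dist_le_diam_of_mem hC_compact.isBounded hx hy
  have hnoise (i) := isMartingaleNoise_of_gaussianReal (hξ i)
    (hind.precomp (g := fun p : Fin T × Fin d => ((i, p.1), p.2))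
      fun p q hpq => by simpa [Prod.ext_iff] using hpq) (hgauss i)
  have hL (i) := hasBoundedSubgradientOn_gradient_sum
    (fun j => (hconv i j).subset (Set.subset_univ C) hC_convex) (hdiff i) (hlip i)
  simp only [Fintype.card_fin] at hnoise hL
  have h := stmt8_general hC_convex hD hCD hproj hΓ hd_pos (fun i => (nn i).cast_nonneg) hw
    (hT ▸ Nat.ceil_pos.2 (by positivity)) (hT ▸ two_mul_le_ceil_mul hd_pos hS _) hL
    (fun i => measurable_gradient _) hnoise (fun i => hθ_zero i ▸ measurable_const)
    (fun i ω => hθ_zero i ▸ hθ₀ i) (fun i t => congrFun (hθ_succ i t t.2)) hθstar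
  rwa [Fintype.card_fin] at h
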